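/- arXiv:2012.15065 — 2 statements merged into one kernel-verified Lean document; each statement's English description precedes it below -/
import Mathlib

section
/- Let m ≥ 7. Suppose F_m(x) = a₁P_m(x₁) + ⋯ + aₙP_m(xₙ) with a₁ ≤ ⋯ ≤ aₙ positive integers represents every positive integer up to m-4 (i.e., for each 1 ≤ r ≤ m-4 there exists an integer vector x with F_m(x) = r). If for some i ≤ n the subform a₁P_m(x₁) + ⋯ + a_iP_m(x_i) represents each of the a₁+⋯+a_i+1 consecutive integers N, N+1, …, N+(a₁+⋯+a_i), then F_m represents each of the m-3 consecutive integers N, N+1, …, N+(m-4). -/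
/-- The generalized `m`-gonal number `P_m(x) = ((m-2)x² - (m-4)x)/2`. -/
def polygonal (m x : ℤ) : ℤ := ((m - 2) * x ^ 2 - (m - 4) * x) / 2

/-!
Apart from `P_m(0) = 0` and `P_m(1) = 1`, every value of `P_m` is at least `m - 3 = P_m(-1)`. Hence
in a representation of `r ≤ m - 4` all variables are `0` or `1`, that is, `r` is the sum of the
coefficients over a set `t` of indices. To represent `N + r`, let the given subform represent `N`
plus the part of this sum inside the subform, and give the remaining variables in `t` the value `1`.
-/

@[simp]
theorem polygonal_zero (m : ℤ) : polygonal m 0 = 0 := by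
  simp [polygonal]

@[simp]
theorem polygonal_one (m : ℤ) : polygonal m 1 = 1 := by
  simp [polygonal]

theorem sub_three_le_polygonal {m x : ℤ} (hm : 3 ≤ m) (h₀ : x ≠ 0) (h₁ : x ≠ 1) :
    m - 3 ≤ polygonal m x := by
  have factor : (m - 2) * x ^ 2 - (m - 4) * x - (m - 3) * 2 =
      (x + 1) * ((m - 2) * x - 2 * (m - 3)) := by ring
  have nonneg : 0 ≤ (x + 1) * ((m - 2) * x - 2 * (m - 3)) := by
    obtain hx | hx : x ≤ -1 ∨ 2 ≤ x := by omega
    · exact mul_nonneg_of_nonpos_of_nonpos (by linarith) (by nlinarith)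
    · exact mul_nonneg (by linarith) (by nlinarith)
  rwa [polygonal, Int.le_ediv_iff_mul_le two_pos, ← sub_nonneg, factor]

theorem polygonal_nonneg {m : ℤ} (hm : 3 ≤ m) (x : ℤ) : 0 ≤ polygonal m x := by
  rcases eq_or_ne x 0 with rfl | h₀
  · simp
  rcases eq_or_ne x 1 with rfl | h₁
  · simp
  · exact (sub_nonneg.mpr hm).trans (sub_three_le_polygonal hm h₀ h₁)

/-- The subform `∑ k ∈ s, a k * P_m(x k)` represents the integer `N`. The values of `x` outside `s`
are irrelevant; keeping them lets subforms on different index sets share one type of vectors. -/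
def PolygonalRepresents {ι : Type*} (m : ℤ) (a : ι → ℤ) (s : Finset ι) (N : ℤ) : Prop :=
  ∃ x : ι → ℤ, ∑ k ∈ s, a k * polygonal m (x k) = N

namespace PolygonalRepresents

variable {ι : Type*} {m : ℤ} {a : ι → ℤ} {s t : Finset ι}

theorem union [DecidableEq ι] {M N : ℤ} (hst : Disjoint s t) (hs : PolygonalRepresents m a s M)
    (ht : PolygonalRepresents m a t N) : PolygonalRepresents m a (s ∪ t) (M + N) := by
  obtain ⟨x, rfl⟩ := hs
  obtain ⟨y, rfl⟩ := ht
  refine ⟨s.piecewise x y, ?_⟩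
  rw [Finset.sum_union hst]
  congr 1 <;> refine Finset.sum_congr rfl fun k hk => ?_
  · rw [Finset.piecewise_eq_of_mem _ _ _ hk]
  · rw [Finset.piecewise_eq_of_notMem _ _ _ (Finset.disjoint_right.mp hst hk)]

theorem sum_of_subset (m : ℤ) (a : ι → ℤ) (hts : t ⊆ s) :
    PolygonalRepresents m a s (∑ k ∈ t, a k) := by
  classical
  refine ⟨fun k => if k ∈ t then 1 else 0, ?_⟩
  simp [apply_ite (polygonal m), Finset.inter_eq_right.mpr hts]

theorem exists_subset_sum_eq {r : ℤ} (hm : 3 ≤ m) (ha : ∀ k ∈ s, 0 < a k)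
    (hr : PolygonalRepresents m a s r) (hrm : r ≤ m - 4) : ∃ t ⊆ s, ∑ k ∈ t, a k = r := by
  obtain ⟨x, rfl⟩ := hr
  have term_le : ∀ k ∈ s, a k * polygonal m (x k) ≤ m - 4 := fun k hk =>
    (Finset.single_le_sum (f := fun k => a k * polygonal m (x k))
      (fun l hl => mul_nonneg (ha l hl).le (polygonal_nonneg hm (x l))) hk).trans hrm
  have eq_zero_or_one : ∀ k ∈ s, x k = 0 ∨ x k = 1 := by
    intro k hk
    by_contra! h
    have gap := sub_three_le_polygonal hm h.1 h.2
    have le_term := le_mul_of_one_le_left (polygonal_nonneg hm (x k)) (ha k hk)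
    linarith [term_le k hk]
  refine ⟨{k ∈ s | x k = 1}, Finset.filter_subset _ _, ?_⟩
  rw [Finset.sum_filter]
  refine Finset.sum_congr rfl fun k hk => ?_
  rcases eq_zero_or_one k hk with h | h <;> simp [h]

end PolygonalRepresents

theorem consecutive_rep_extends_general {ι : Type*} {m : ℤ} {a : ι → ℤ} {s u : Finset ι}
    (hsu : s ⊆ u) (hpos : ∀ k ∈ u, 0 < a k)
    (hrep : ∀ r, 1 ≤ r → r ≤ m - 4 → PolygonalRepresents m a u r) {N : ℤ}
    (hsub : ∀ j, N ≤ j → j ≤ N + ∑ k ∈ s, a k → PolygonalRepresents m a s j)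
    {j : ℤ} (hNj : N ≤ j) (hjN : j ≤ N + (m - 4)) : PolygonalRepresents m a u j := by
  classical
  have rep_sub : PolygonalRepresents m a u (j - N) := by
    rcases hNj.eq_or_lt with rfl | h
    · simpa using PolygonalRepresents.sum_of_subset m a u.empty_subset
    · exact hrep _ (by linarith) (by linarith)
  have hm : 3 ≤ m := by linarith
  obtain ⟨t, htu, ht⟩ := rep_sub.exists_subset_sum_eq hm hpos (by linarith)
  have inside_nonneg : 0 ≤ ∑ k ∈ t ∩ s, a k :=
    Finset.sum_nonneg fun k hk => (hpos k (htu (Finset.mem_inter.mp hk).1)).le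
  have inside_le : ∑ k ∈ t ∩ s, a k ≤ ∑ k ∈ s, a k :=
    Finset.sum_le_sum_of_subset_of_nonneg Finset.inter_subset_right
      fun k hk _ => (hpos k (hsu hk)).le
  have inside := hsub (N + ∑ k ∈ t ∩ s, a k) (by linarith) (by linarith)
  have outside : PolygonalRepresents m a (u \ s) (∑ k ∈ t \ s, a k) :=
    .sum_of_subset m a (Finset.sdiff_subset_sdiff htu subset_rfl)
  have combined := inside.union Finset.disjoint_sdiff outside
  rwa [Finset.union_sdiff_of_subset hsu, add_assoc, Finset.sum_inter_add_sum_sdiff, ht,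
    add_sub_cancel] at combined

theorem consecutive_rep_extends (m : ℤ) (hm : 7 ≤ m) (n : ℕ)
    (a : Fin n → ℤ) (hpos : ∀ k, 0 < a k) (hmono : Monotone a)
    (hrep : ∀ r : ℤ, 1 ≤ r → r ≤ m - 4 →
      ∃ x : Fin n → ℤ, ∑ k, a k * polygonal m (x k) = r)
    (i : ℕ) (hi : i ≤ n) (N : ℤ)
    (hsub : ∀ j : ℤ, N ≤ j →
      j ≤ N + ∑ k ∈ Finset.univ.filter (fun k : Fin n => (k : ℕ) < i), a k →
      ∃ x : Fin n → ℤ,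
        ∑ k ∈ Finset.univ.filter (fun k : Fin n => (k : ℕ) < i),
          a k * polygonal m (x k) = j) :
    ∀ j : ℤ, N ≤ j → j ≤ N + (m - 4) →
      ∃ x : Fin n → ℤ, ∑ k, a k * polygonal m (x k) = j := by
  intro j
  exact consecutive_rep_extends_general (Finset.filter_subset _ _) (fun k _ => hpos k) hrep hsub
end

section
/- Let m ≥ 3 and let A ≥ 0, B be integers with 8A + 4B - B² ≥ 0 and such that 8A + 4B - B² is not of the form 4^l(8k+7) for any nonnegative integers l, k. Then there exist integers x₁, x₂, x₃, x₄ with P_m(x₁) + P_m(x₂) + P_m(x₃) + P_m(x₄) = A(m-2) + B. -/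
/-!
Since `2 P_m(x) = (m - 2)(x² - x) + 2x`, it suffices to find four integers with sum `B` and sum of
squares `2A + B`, and these do not depend on `m`. As in Cauchy's lemma, a Hadamard change of
variables turns them into a representation of `4(2A + B) - B²` as a sum of three squares.

For Legendre's three-square theorem, every positive definite ternary form with integral Gram matrix
of determinant `1` represents only sums of three squares, because Hermite reduction leads to
`x² + y² + z²`. Following Dirichlet, a prime in a suitable arithmetic progression together with
quadratic reciprocity yields such a form representing the given integer.
-/

/-- The property of being a sum of three integer squares. -/
def IsSumThreeSquares (n : ℤ) : Prop := ∃ u v w : ℤ, n = u ^ 2 + v ^ 2 + w ^ 2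

theorem IsSumThreeSquares.sq_mul {n : ℤ} (k : ℤ) :
    IsSumThreeSquares n → IsSumThreeSquares (k ^ 2 * n) := by
  rintro ⟨u, v, w, rfl⟩
  exact ⟨k * u, k * v, k * w, by ring⟩

/-! ### Reduction of ternary forms -/

theorem exists_abs_two_mul_add_mul_le (s : ℤ) {m : ℤ} (hm : 0 < m) :
    ∃ k : ℤ, |2 * (s + k * m)| ≤ m := by
  lift m to ℕ using hm.le
  have hpos : 0 < m := by exact_mod_cast hm
  refine ⟨-Int.bdiv s m, ?_⟩
  have hbmod : s + -Int.bdiv s m * m = Int.bmod s m := by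
    linarith [Int.bdiv_add_bmod' s m]
  rw [hbmod, abs_le]
  have hlower := Int.le_bmod (x := s) hpos
  have hupper := Int.bmod_le (x := s) hpos
  constructor <;> omega

/-- An integral ternary quadratic form, given by the entries of its Gram matrix
`[[a, d, e], [d, b, f], [e, f, c]]`. -/
structure TernaryForm where
  (a b c d e f : ℤ)

namespace TernaryForm

variable (Q : TernaryForm)

/-- The value of the quadratic form at the vector `(x, y, z)`. -/
def eval (x y z : ℤ) : ℤ :=
  Q.a * x ^ 2 + Q.b * y ^ 2 + Q.c * z ^ 2 + 2 * (Q.d * x * y + Q.e * x * z + Q.f * y * z)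

/-- The set of integers represented by the form. -/
def values : Set ℤ := {n | ∃ x y z, Q.eval x y z = n}

/-- The determinant of the Gram matrix. -/
def det : ℤ :=
  Q.a * Q.b * Q.c + 2 * Q.d * Q.e * Q.f - Q.a * Q.f ^ 2 - Q.b * Q.e ^ 2 - Q.c * Q.d ^ 2

/-- The principal minor of the Gram matrix on the first two variables. Together with `cross` and
`minorXZ` it forms the Gram matrix `[[minorXY, cross], [cross, minorXZ]]` of the binary form in
`y, z` left over when `a * Q` is completed to the square `(a x + d y + e z)²`. -/
def minorXY : ℤ := Q.a * Q.b - Q.d ^ 2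

/-- The principal minor of the Gram matrix on the first and third variables. -/
def minorXZ : ℤ := Q.a * Q.c - Q.e ^ 2

/-- The off-diagonal entry of the binary form described at `minorXY`. -/
def cross : ℤ := Q.a * Q.f - Q.d * Q.e

theorem minorXY_mul_minorXZ_sub_cross_sq :
    Q.minorXY * Q.minorXZ - Q.cross ^ 2 = Q.a * Q.det := by
  unfold minorXY minorXZ cross det
  ring

/-- Positive definiteness, in the form of Sylvester's criterion. -/
structure PosDef : Prop where
  a_pos : 0 < Q.a
  minorXY_pos : 0 < Q.minorXY
  det_pos : 0 < Q.det

/-- Reducedness in the sense of Hermite: both the form on the first two variables and the binary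
form described at `minorXY` have small off-diagonal entry and smallest coefficient in front. -/
structure IsReduced : Prop where
  abs_two_mul_d_le : |2 * Q.d| ≤ Q.a
  abs_two_mul_cross_le : |2 * Q.cross| ≤ Q.minorXY
  a_le_b : Q.a ≤ Q.b
  minorXY_le_minorXZ : Q.minorXY ≤ Q.minorXZ

/-- The form obtained by exchanging the variables `x` and `y`. -/
def swapXY : TernaryForm := ⟨Q.b, Q.a, Q.c, Q.d, Q.f, Q.e⟩

/-- The form obtained by exchanging the variables `y` and `z`. -/
def swapYZ : TernaryForm := ⟨Q.a, Q.c, Q.b, Q.e, Q.d, Q.f⟩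

/-- The form obtained by substituting `x + j * y` for `x`. -/
def shearXY (j : ℤ) : TernaryForm :=
  ⟨Q.a, Q.b + 2 * j * Q.d + j ^ 2 * Q.a, Q.c, Q.d + j * Q.a, Q.e, Q.f + j * Q.e⟩

/-- The form obtained by substituting `y + k * z` for `y`. -/
def shearYZ (k : ℤ) : TernaryForm :=
  ⟨Q.a, Q.b, Q.c + 2 * k * Q.f + k ^ 2 * Q.b, Q.d, Q.e + k * Q.d, Q.f + k * Q.b⟩

theorem det_swapXY : Q.swapXY.det = Q.det := by
  unfold det swapXY
  ring

theorem minorXY_swapXY : Q.swapXY.minorXY = Q.minorXY := by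
  unfold minorXY swapXY
  ring

theorem det_swapYZ : Q.swapYZ.det = Q.det := by
  unfold det swapYZ
  ring

theorem det_shearXY (j : ℤ) : (Q.shearXY j).det = Q.det := by
  unfold det shearXY
  ring

theorem minorXY_shearXY (j : ℤ) : (Q.shearXY j).minorXY = Q.minorXY := by
  unfold minorXY shearXY
  ring

theorem cross_shearXY (j : ℤ) : (Q.shearXY j).cross = Q.cross := by
  unfold cross shearXY
  ring

theorem det_shearYZ (k : ℤ) : (Q.shearYZ k).det = Q.det := by
  unfold det shearYZ
  ring

theorem cross_shearYZ (k : ℤ) : (Q.shearYZ k).cross = Q.cross + k * Q.minorXY := by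
  unfold cross minorXY shearYZ
  ring

theorem values_subset_values_swapXY : Q.values ⊆ Q.swapXY.values := by
  rintro _ ⟨x, y, z, rfl⟩
  exact ⟨y, x, z, by unfold eval swapXY; ring⟩

theorem values_subset_values_swapYZ : Q.values ⊆ Q.swapYZ.values := by
  rintro _ ⟨x, y, z, rfl⟩
  exact ⟨x, z, y, by unfold eval swapYZ; ring⟩

theorem values_subset_values_shearXY (j : ℤ) : Q.values ⊆ (Q.shearXY j).values := by
  rintro _ ⟨x, y, z, rfl⟩
  exact ⟨x - j * y, y, z, by unfold eval shearXY; ring⟩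

theorem values_subset_values_shearYZ (k : ℤ) : Q.values ⊆ (Q.shearYZ k).values := by
  rintro _ ⟨x, y, z, rfl⟩
  exact ⟨x, y - k * z, z, by unfold eval shearYZ; ring⟩

variable {Q}

namespace PosDef

theorem minorXZ_pos (hQ : Q.PosDef) : 0 < Q.minorXZ := by
  have h : 0 < Q.minorXY * Q.minorXZ := by
    nlinarith [Q.minorXY_mul_minorXZ_sub_cross_sq, mul_pos hQ.a_pos hQ.det_pos]
  exact pos_of_mul_pos_right h hQ.minorXY_pos.le

theorem b_pos (hQ : Q.PosDef) : 0 < Q.b := by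
  have h : 0 < Q.a * Q.b := (sq_nonneg Q.d).trans_lt (sub_pos.1 hQ.minorXY_pos)
  exact pos_of_mul_pos_right h hQ.a_pos.le

theorem swapXY (hQ : Q.PosDef) : Q.swapXY.PosDef :=
  ⟨hQ.b_pos, Q.minorXY_swapXY ▸ hQ.minorXY_pos, Q.det_swapXY ▸ hQ.det_pos⟩

theorem swapYZ (hQ : Q.PosDef) : Q.swapYZ.PosDef :=
  ⟨hQ.a_pos, hQ.minorXZ_pos, Q.det_swapYZ ▸ hQ.det_pos⟩

theorem shearXY (hQ : Q.PosDef) (j : ℤ) : (Q.shearXY j).PosDef :=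
  ⟨hQ.a_pos, Q.minorXY_shearXY j ▸ hQ.minorXY_pos, Q.det_shearXY j ▸ hQ.det_pos⟩

theorem shearYZ (hQ : Q.PosDef) (k : ℤ) : (Q.shearYZ k).PosDef :=
  ⟨hQ.a_pos, hQ.minorXY_pos, Q.det_shearYZ k ▸ hQ.det_pos⟩

end PosDef

theorem PosDef.exists_abs_two_mul_le (hQ : Q.PosDef) :
    ∃ S : TernaryForm, S.PosDef ∧ S.det = Q.det ∧ Q.values ⊆ S.values ∧
      S.a = Q.a ∧ S.minorXY = Q.minorXY ∧ |2 * S.d| ≤ S.a ∧ |2 * S.cross| ≤ S.minorXY := by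
  obtain ⟨j, hj⟩ := exists_abs_two_mul_add_mul_le Q.d hQ.a_pos
  obtain ⟨k, hk⟩ := exists_abs_two_mul_add_mul_le Q.cross hQ.minorXY_pos
  have hminor : ((Q.shearXY j).shearYZ k).minorXY = Q.minorXY := Q.minorXY_shearXY j
  refine ⟨(Q.shearXY j).shearYZ k, (hQ.shearXY j).shearYZ k,
    (det_shearYZ _ k).trans (Q.det_shearXY j),
    (Q.values_subset_values_shearXY j).trans (values_subset_values_shearYZ _ k),
    rfl, hminor, hj, ?_⟩
  rwa [hminor, cross_shearYZ, cross_shearXY, minorXY_shearXY]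

/-- Each exchange of variables strictly decreases `a + minorXY`, which the shears preserve. -/
theorem PosDef.exists_isReduced (hQ : Q.PosDef) :
    ∃ R : TernaryForm, R.PosDef ∧ R.IsReduced ∧ R.det = Q.det ∧ Q.values ⊆ R.values := by
  induction hN : (Q.a + Q.minorXY).toNat using Nat.strong_induction_on generalizing Q with
  | _ N ih =>
    obtain ⟨S, hS, hSdet, hQS, hSa, hSminor, hd, hcross⟩ := hQ.exists_abs_two_mul_le
    have descend {T : TernaryForm} (hT : T.PosDef) (hTdet : T.det = S.det)
        (hST : S.values ⊆ T.values) (hlt : T.a + T.minorXY < S.a + S.minorXY) :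
        ∃ R : TernaryForm, R.PosDef ∧ R.IsReduced ∧ R.det = Q.det ∧ Q.values ⊆ R.values := by
      have hpos := add_pos hS.a_pos hS.minorXY_pos
      obtain ⟨R, hR, hred, hdet, hval⟩ := ih _ (by omega) hT rfl
      exact ⟨R, hR, hred, hdet.trans (hTdet.trans hSdet), hQS.trans (hST.trans hval)⟩
    rcases le_or_gt S.a S.b with hab | hba
    · rcases le_or_gt S.minorXY S.minorXZ with hminor | hminor
      · exact ⟨S, hS, ⟨hd, hcross, hab, hminor⟩, hSdet, hQS⟩
      · exact descend hS.swapYZ S.det_swapYZ S.values_subset_values_swapYZ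
          (add_lt_add_right hminor S.a)
    · exact descend hS.swapXY S.det_swapXY S.values_subset_values_swapXY
        (add_lt_add_of_lt_of_le hba S.minorXY_swapXY.le)

namespace IsReduced

theorem three_mul_a_sq_le (hQ : Q.IsReduced) : 3 * Q.a ^ 2 ≤ 4 * Q.minorXY := by
  have ha : 0 ≤ Q.a := (abs_nonneg _).trans hQ.abs_two_mul_d_le
  have hd : (2 * Q.d) ^ 2 ≤ Q.a ^ 2 := sq_le_sq.2 (hQ.abs_two_mul_d_le.trans (le_abs_self _))
  have hab : Q.a * Q.a ≤ Q.a * Q.b := mul_le_mul_of_nonneg_left hQ.a_le_b ha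
  unfold minorXY
  linarith

theorem three_mul_minorXY_sq_le (hQ : Q.IsReduced) :
    3 * Q.minorXY ^ 2 ≤ 4 * (Q.a * Q.det) := by
  have hminor : 0 ≤ Q.minorXY := (abs_nonneg _).trans hQ.abs_two_mul_cross_le
  have hcross : (2 * Q.cross) ^ 2 ≤ Q.minorXY ^ 2 :=
    sq_le_sq.2 (hQ.abs_two_mul_cross_le.trans (le_abs_self _))
  have hle : Q.minorXY * Q.minorXY ≤ Q.minorXY * Q.minorXZ :=
    mul_le_mul_of_nonneg_left hQ.minorXY_le_minorXZ hminor
  linarith [Q.minorXY_mul_minorXZ_sub_cross_sq]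

theorem a_eq_one (hQ : Q.IsReduced) (ha : 0 < Q.a) (hdet : Q.det = 1) : Q.a = 1 := by
  have hminor : 3 * Q.minorXY ^ 2 ≤ 4 * Q.a := by
    simpa only [hdet, mul_one] using hQ.three_mul_minorXY_sq_le
  have hsq : (3 * Q.a ^ 2) ^ 2 ≤ (4 * Q.minorXY) ^ 2 :=
    pow_le_pow_left₀ (by positivity) hQ.three_mul_a_sq_le 2
  have hcube : 27 * Q.a ^ 3 ≤ 64 := by
    refine le_of_mul_le_mul_right ?_ ha
    linarith
  by_contra hne
  have htwo : 2 ^ 3 ≤ Q.a ^ 3 := pow_le_pow_left₀ (by norm_num) (by omega) 3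
  linarith

theorem minorXY_eq_one (hQ : Q.IsReduced) (ha : Q.a = 1) (hdet : Q.det = 1) :
    Q.minorXY = 1 := by
  have hlower := hQ.three_mul_a_sq_le
  have hupper := hQ.three_mul_minorXY_sq_le
  rw [ha] at hlower
  rw [ha, hdet] at hupper
  nlinarith

theorem isSumThreeSquares (hQ : Q.IsReduced) (ha : 0 < Q.a) (hdet : Q.det = 1) {n : ℤ}
    (hn : n ∈ Q.values) : IsSumThreeSquares n := by
  have ha1 := hQ.a_eq_one ha hdet
  have hminor := hQ.minorXY_eq_one ha1 hdet
  have hd : Q.d = 0 := by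
    have := abs_le.1 (ha1 ▸ hQ.abs_two_mul_d_le)
    omega
  have hcross : Q.cross = 0 := by
    have := abs_le.1 (hminor ▸ hQ.abs_two_mul_cross_le)
    omega
  have hb : Q.b = 1 := by simpa [minorXY, ha1, hd] using hminor
  have hf : Q.f = 0 := by simpa [cross, ha1, hd] using hcross
  have hc : Q.c = 1 + Q.e ^ 2 := by
    simp only [det, ha1, hb, hd, hf] at hdet
    linarith
  obtain ⟨x, y, z, rfl⟩ := hn
  refine ⟨x + Q.e * z, y, z, ?_⟩
  simp only [eval, ha1, hb, hc, hd, hf]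
  ring

end IsReduced

theorem PosDef.isSumThreeSquares (hQ : Q.PosDef) (hdet : Q.det = 1) {n : ℤ}
    (hn : n ∈ Q.values) : IsSumThreeSquares n := by
  obtain ⟨R, hR, hred, hRdet, hval⟩ := hQ.exists_isReduced
  exact hred.isSumThreeSquares hR.a_pos (hRdet.trans hdet) (hval hn)

end TernaryForm

theorem isSumThreeSquares_of_dvd_sq_add {n d x : ℤ} (hd : 0 < d) (hdn : 1 < d * n)
    (h : d * n - 1 ∣ x ^ 2 + d) : IsSumThreeSquares n := by
  obtain ⟨a, ha⟩ := h
  let Q : TernaryForm := ⟨a, d * n - 1, n, x, 1, 0⟩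
  have hapos : 0 < a := by
    refine pos_of_mul_pos_right (a := d * n - 1) ?_ (by linarith)
    rw [← ha]
    positivity
  have hminor : Q.minorXY = d := by
    simp only [TernaryForm.minorXY, Q]
    linarith
  have hdet : Q.det = 1 := by
    simp only [TernaryForm.det, Q]
    linear_combination (-n) * ha
  have hQ : Q.PosDef := ⟨hapos, hminor ▸ hd, hdet ▸ one_pos⟩
  exact hQ.isSumThreeSquares hdet ⟨0, 0, 1, by simp [TernaryForm.eval, Q]⟩

/-! ### The three-square theorem -/

theorem exists_dvd_sq_add_of_jacobiSym_eq_one {p : ℕ} (hp : p.Prime) {d : ℤ}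
    (h : jacobiSym (-d) p = 1) : ∃ x : ℤ, (p : ℤ) ∣ x ^ 2 + d := by
  have := Fact.mk hp
  obtain ⟨r, hr⟩ := ZMod.isSquare_of_jacobiSym_eq_one h
  obtain ⟨x, rfl⟩ := ZMod.intCast_surjective r
  refine ⟨x, (ZMod.intCast_zmod_eq_zero_iff_dvd _ p).1 ?_⟩
  push_cast at hr ⊢
  rw [sq, ← hr, neg_add_cancel]

theorem exists_two_mul_dvd_sq_add {p d x : ℤ} (hp : Odd p) (h : p ∣ x ^ 2 + d) :
    ∃ y : ℤ, 2 * p ∣ y ^ 2 + d := by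
  obtain ⟨y, hy, hpar⟩ : ∃ y : ℤ, p ∣ y ^ 2 + d ∧ Even (y ^ 2 + d) := by
    by_cases hx : Even (x ^ 2 + d)
    · exact ⟨x, h, hx⟩
    · have hshift : (x + p) ^ 2 + d = x ^ 2 + d + p * (2 * x + p) := by ring
      refine ⟨x + p, hshift ▸ dvd_add h (dvd_mul_right _ _), hshift ▸ ?_⟩
      exact (Int.not_even_iff_odd.1 hx).add_odd (hp.mul ((even_two_mul x).add_odd hp))
  have hcop : IsCoprime 2 p := Int.isCoprime_two_left.2 hp
  exact ⟨y, hcop.mul_dvd hpar.two_dvd hy⟩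

theorem jacobiSym_neg_eq {a b : ℕ} (ha : Odd a) (hb : Odd b) (h : b % 4 = 1 ∨ a % 4 = 3) :
    jacobiSym (-a) b = jacobiSym b a := by
  rw [jacobiSym.neg _ hb]
  rcases Nat.odd_mod_four_iff.1 (Nat.odd_iff.1 hb) with hb1 | hb3
  · rw [ZMod.χ₄_nat_one_mod_four hb1, one_mul,
      jacobiSym.quadratic_reciprocity_one_mod_four' ha hb1]
  · have ha3 : a % 4 = 3 := by omega
    rw [ZMod.χ₄_nat_three_mod_four hb3,
      jacobiSym.quadratic_reciprocity_three_mod_four ha3 hb3, neg_one_mul, neg_neg]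

theorem jacobiSym_eq_one_of_dvd_mul_add_one {t p : ℤ} {d : ℕ} (ht : jacobiSym (-t) d = 1)
    (h : (d : ℤ) ∣ t * p + 1) : jacobiSym p d = 1 := by
  have hmod : (-t * p) % d = 1 % d := Int.modEq_iff_dvd.2 (by convert h using 1; ring)
  calc
    jacobiSym p d = jacobiSym (-t) d * jacobiSym p d := by rw [ht, one_mul]
    _ = jacobiSym (-t * p) d := (jacobiSym.mul_left _ _ _).symm
    _ = jacobiSym 1 d := jacobiSym.mod_left' hmod
    _ = 1 := jacobiSym.one_left d

theorem exists_prime_mul_add_one_eq {n t c r : ℕ} (hn : n ≠ 0) (hr : Odd r)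
    (h : t * r + 1 = c * n) :
    ∃ p d : ℕ, p.Prime ∧ p ≡ r [MOD 4] ∧ d ≡ c [MOD 4 * t] ∧ t * p + 1 = d * n := by
  have hcop4 : Nat.Coprime r 4 := (Nat.coprime_two_right.2 hr).pow_right 2
  have hcopn : Nat.Coprime r n := by
    have hdvd : r.gcd n ∣ t * r + 1 := h ▸ (r.gcd_dvd_right n).mul_left c
    exact Nat.dvd_one.1 ((Nat.dvd_add_right ((r.gcd_dvd_left n).mul_left t)).1 hdvd)
  obtain ⟨p, hpr, hp, hmod⟩ := Nat.forall_exists_prime_gt_and_modEq r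
    (mul_ne_zero four_ne_zero hn) (hcop4.mul_right hcopn)
  obtain ⟨j, hj⟩ := (Nat.modEq_iff_dvd' hpr.le).1 hmod.symm
  have hp_eq : p = r + 4 * n * j := by omega
  refine ⟨p, c + 4 * t * j, hp, hmod.of_mul_right n, by simp [Nat.ModEq], ?_⟩
  rw [hp_eq]
  linear_combination h

/-- Dirichlet's theorem replaces `(r, c)` by `(p, d)` with `p` prime; reciprocity then makes `-d` a
square modulo `t * p = d * n - 1`. -/
theorem isSumThreeSquares_of_mul_add_one_eq {n t c r : ℕ} (hn : 1 < n) (ht : t = 1 ∨ t = 2)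
    (hr : Odd r) (hc : Odd c) (hrc : r % 4 = 1 ∨ c % 4 = 3) (hJ : jacobiSym (-t) c = 1)
    (h : t * r + 1 = c * n) : IsSumThreeSquares n := by
  obtain ⟨p, d, hp, hpr, hdc, hpd⟩ := exists_prime_mul_add_one_eq (by omega) hr h
  have hpr4 : p % 4 = r % 4 := hpr
  have hdc4 : d % 4 = c % 4 := hdc.of_mul_right t
  have hpodd : Odd p := by rw [Nat.odd_iff] at hr ⊢; omega
  have hdodd : Odd d := by rw [Nat.odd_iff] at hc ⊢; omega
  have hJd : jacobiSym (-t) d = 1 := by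
    rw [← hJ, jacobiSym.mod_right _ hdodd, jacobiSym.mod_right _ hc, Int.natAbs_neg,
      Int.natAbs_natCast, hdc]
  have hpdz : (t : ℤ) * p + 1 = d * n := by exact_mod_cast hpd
  have hJp : jacobiSym (-d) p = 1 := by
    rw [jacobiSym_neg_eq hdodd hpodd (by omega)]
    exact jacobiSym_eq_one_of_dvd_mul_add_one hJd ⟨n, hpdz⟩
  obtain ⟨x, hx⟩ := exists_dvd_sq_add_of_jacobiSym_eq_one hp hJp
  obtain ⟨y, hy⟩ : ∃ y : ℤ, (t : ℤ) * p ∣ y ^ 2 + d := by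
    rcases ht with rfl | rfl
    · exact ⟨x, by simpa using hx⟩
    · exact exists_two_mul_dvd_sq_add (by exact_mod_cast hpodd) hx
  have hdn : 1 < d * n := one_lt_mul_of_le_of_lt hdodd.pos hn
  have hdvd : (d : ℤ) * n - 1 ∣ y ^ 2 + d := by rwa [← hpdz, add_sub_cancel_right]
  exact isSumThreeSquares_of_dvd_sq_add (mod_cast hdodd.pos) (mod_cast hdn) hdvd

theorem isSumThreeSquares_of_not_four_dvd {n : ℕ} (h4 : ¬4 ∣ n) (h7 : n % 8 ≠ 7) :
    IsSumThreeSquares n := by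
  obtain rfl | hn : n = 1 ∨ 1 < n := by omega
  · exact ⟨1, 0, 0, by norm_num⟩
  obtain h | h | h : n % 4 = 2 ∨ n % 8 = 3 ∨ n % 4 = 1 := by omega
  · exact isSumThreeSquares_of_mul_add_one_eq (t := 1) (c := 1) (r := n - 1) hn (.inl rfl)
      (by rw [Nat.odd_iff]; omega) odd_one (by omega) (jacobiSym.one_right _) (by omega)
  · exact isSumThreeSquares_of_mul_add_one_eq (t := 2) (c := 1) (r := (n - 1) / 2) hn (.inr rfl)
      (by rw [Nat.odd_iff]; omega) odd_one (by omega) (jacobiSym.one_right _) (by omega)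
  · exact isSumThreeSquares_of_mul_add_one_eq (t := 2) (c := 3) (r := (3 * n - 1) / 2) hn
      (.inr rfl) (by rw [Nat.odd_iff]; omega) (by decide) (by omega) (by norm_num) (by omega)

theorem isSumThreeSquares_of_ne_four_pow_mul {n : ℤ} (hn : 0 ≤ n)
    (hform : ∀ l k : ℕ, n ≠ 4 ^ l * (8 * (k : ℤ) + 7)) : IsSumThreeSquares n := by
  lift n to ℕ using hn
  rcases eq_or_ne n 0 with rfl | hn0
  · exact ⟨0, 0, 0, by norm_num⟩
  obtain ⟨l, s, hs, rfl⟩ := Nat.exists_eq_pow_mul_and_not_dvd hn0 4 (by norm_num)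
  have h7 : s % 8 ≠ 7 := fun h ↦ hform l (s / 8) (by
    have hs_eq : s = 8 * (s / 8) + 7 := by omega
    exact_mod_cast congrArg (4 ^ l * ·) hs_eq)
  have hpow : ((4 ^ l * s : ℕ) : ℤ) = (2 ^ l) ^ 2 * s := by
    push_cast
    rw [← pow_mul, mul_comm l, pow_mul]
    norm_num
  exact hpow ▸ (isSumThreeSquares_of_not_four_dvd hs h7).sq_mul (2 ^ l)

/-! ### Cauchy's lemma -/

theorem sq_emod_four (s : ℤ) : s ^ 2 % 4 = s % 2 := by
  obtain ⟨r, rfl | rfl⟩ := s.even_or_odd' <;> ring_nf <;> omega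

theorem eight_dvd_sq_sub_two_mul_of_even {s : ℤ} (hs : Even s) : 8 ∣ s ^ 2 - 2 * s := by
  obtain ⟨r, rfl⟩ := hs.two_dvd
  obtain ⟨q, hq⟩ := (Int.even_mul_pred_self r).two_dvd
  exact ⟨q, by linear_combination 4 * hq⟩

theorem emod_two_eq_of_sum_four_sq {a b u v w : ℤ} (h : b ^ 2 + u ^ 2 + v ^ 2 + w ^ 2 = 4 * a) :
    u % 2 = b % 2 ∧ v % 2 = b % 2 ∧ w % 2 = b % 2 := by
  have := sq_emod_four b
  have := sq_emod_four u
  have := sq_emod_four v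
  have := sq_emod_four w
  omega

theorem four_dvd_add_or_four_dvd_sub {a b u v w : ℤ}
    (h : b ^ 2 + u ^ 2 + v ^ 2 + w ^ 2 = 4 * a) (hab : a % 2 = b % 2) :
    4 ∣ b + u + v + w ∨ 4 ∣ b + u + v - w := by
  obtain ⟨hu, hv, hw⟩ := emod_two_eq_of_sum_four_sq h
  rcases Int.even_or_odd b with hb | hb
  · have hb0 := Int.even_iff.1 hb
    have := eight_dvd_sq_sub_two_mul_of_even hb
    have := eight_dvd_sq_sub_two_mul_of_even (Int.even_iff.2 (hu.trans hb0))
    have := eight_dvd_sq_sub_two_mul_of_even (Int.even_iff.2 (hv.trans hb0))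
    have := eight_dvd_sq_sub_two_mul_of_even (Int.even_iff.2 (hw.trans hb0))
    omega
  · have hb1 := Int.odd_iff.1 hb
    omega

theorem exists_sum_eq_of_four_dvd {a b u v w : ℤ} (h : b ^ 2 + u ^ 2 + v ^ 2 + w ^ 2 = 4 * a)
    (h4 : 4 ∣ b + u + v + w) :
    ∃ x y z t : ℤ, x + y + z + t = b ∧ x ^ 2 + y ^ 2 + z ^ 2 + t ^ 2 = a := by
  obtain ⟨hu, hv, hw⟩ := emod_two_eq_of_sum_four_sq h
  obtain ⟨x, hx⟩ := h4
  obtain ⟨y, hy⟩ : 4 ∣ b + u - v - w := by omega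
  obtain ⟨z, hz⟩ : 4 ∣ b - u + v - w := by omega
  obtain ⟨t, ht⟩ : 4 ∣ b - u - v + w := by omega
  refine ⟨x, y, z, t, by linarith, ?_⟩
  have hsq : (4 * x) ^ 2 + (4 * y) ^ 2 + (4 * z) ^ 2 + (4 * t) ^ 2 = 16 * a := by
    rw [← hx, ← hy, ← hz, ← ht]
    linear_combination 4 * h
  linarith

theorem exists_sum_eq_and_sum_sq_eq {a b : ℤ} (hab : a % 2 = b % 2)
    (h : IsSumThreeSquares (4 * a - b ^ 2)) :
    ∃ x y z t : ℤ, x + y + z + t = b ∧ x ^ 2 + y ^ 2 + z ^ 2 + t ^ 2 = a := by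
  obtain ⟨u, v, w, h⟩ := h
  have hsum : b ^ 2 + u ^ 2 + v ^ 2 + w ^ 2 = 4 * a := by linarith
  rcases four_dvd_add_or_four_dvd_sub hsum hab with h4 | h4
  · exact exists_sum_eq_of_four_dvd hsum h4
  · exact exists_sum_eq_of_four_dvd (w := -w) (by rwa [neg_sq]) h4

/-! ### Sums of polygonal numbers -/

theorem two_mul_polygonal (m x : ℤ) : 2 * polygonal m x = (m - 2) * (x ^ 2 - x) + 2 * x := by
  obtain ⟨t, ht⟩ := (Int.even_mul_pred_self x).two_dvd
  have hdvd : 2 ∣ (m - 2) * x ^ 2 - (m - 4) * x :=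
    ⟨(m - 2) * t + x, by linear_combination (m - 2) * ht⟩
  rw [polygonal, Int.mul_ediv_cancel' hdvd]
  ring

theorem rep_1111_general (A B : ℤ) (hd : 0 ≤ 8 * A + 4 * B - B ^ 2)
    (hform : ∀ l k : ℕ, 8 * A + 4 * B - B ^ 2 ≠ (4 : ℤ) ^ l * (8 * (k : ℤ) + 7)) :
    ∃ x₁ x₂ x₃ x₄ : ℤ, ∀ m : ℤ,
      polygonal m x₁ + polygonal m x₂ + polygonal m x₃ + polygonal m x₄ =
        A * (m - 2) + B := by
  have hdisc : 8 * A + 4 * B - B ^ 2 = 4 * (2 * A + B) - B ^ 2 := by ring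
  have hthree := hdisc ▸ isSumThreeSquares_of_ne_four_pow_mul hd hform
  obtain ⟨x, y, z, t, hsum, hsq⟩ := exists_sum_eq_and_sum_sq_eq (by omega) hthree
  refine ⟨x, y, z, t, fun m ↦ mul_left_cancel₀ two_ne_zero ?_⟩
  linear_combination two_mul_polygonal m x + two_mul_polygonal m y + two_mul_polygonal m z +
    two_mul_polygonal m t + (m - 2) * hsq + (4 - m) * hsum

theorem rep_1111 (m : ℤ) (hm : 3 ≤ m) (A B : ℤ) (hA : 0 ≤ A)
    (hd : 0 ≤ 8 * A + 4 * B - B ^ 2)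
    (hform : ∀ l k : ℕ, 8 * A + 4 * B - B ^ 2 ≠ (4 : ℤ) ^ l * (8 * (k : ℤ) + 7)) :
    ∃ x₁ x₂ x₃ x₄ : ℤ,
      polygonal m x₁ + polygonal m x₂ + polygonal m x₃ + polygonal m x₄ =
        A * (m - 2) + B := by
  obtain ⟨x₁, x₂, x₃, x₄, h⟩ := rep_1111_general A B hd hform
  exact ⟨x₁, x₂, x₃, x₄, h m⟩
end
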